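/- Suppose 𝕡 is the chain pomset on [s] (the total order 1 ≺ 2 ≺ … ≺ s), all blocks have the same dimension, k_1 = k_2 = … = k_s = t, and 𝒞 ⊆ ℤ_m^n is an MDS linear (n, m^k, d) (𝕡,π)-code. Then for every ideal I of 𝕡: |B_I ∩ 𝒞| = 1 if |I| ≤ ((n−k)/t)·l; |B_I ∩ 𝒞| = m^{tλ−n+k} if |I| = λ·l ≥ ((n−k)/t)·l for an integer λ; and |B_I ∩ 𝒞| = (2p+1)^t · m^{tλ−n+k} if |I| = λ·l + p > ((n−k)/t)·l for integers λ and 1 ≤ p ≤ l−1. -/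

import Mathlib

open scoped Classical

noncomputable section

/-- Lee weight of an element of `ZMod m`. -/
def leeWt (m : ℕ) (a : ZMod m) : ℕ := min a.val (m - a.val)

/-- Block Lee weight of the `i`-th block of `u`. -/
def blockWt (m s : ℕ) (π : Fin s → ℕ) (u : ∀ i : Fin s, Fin (π i) → ZMod m)
    (i : Fin s) : ℕ :=
  Finset.univ.sup fun t => leeWt m (u i t)

/-- The `(𝕡,π)`-weight of `u`. -/
def pomsetWt (m s : ℕ) (P : PartialOrder (Fin s)) (π : Fin s → ℕ)
    (u : ∀ i : Fin s, Fin (π i) → ZMod m) : ℕ :=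
  ∑ i : Fin s,
    if ∃ j, j ≠ i ∧ P.le i j ∧ 0 < blockWt m s π u j then m / 2
    else blockWt m s π u i

/-- The pomset block distance. -/
def pomsetDist (m s : ℕ) (P : PartialOrder (Fin s)) (π : Fin s → ℕ)
    (u v : ∀ i : Fin s, Fin (π i) → ZMod m) : ℕ :=
  pomsetWt m s P π (u - v)

/-- An ideal of the pomset `𝕡`, given by its count function `I : [s] → {0,…,⌊m/2⌋}`. -/
def IsIdeal (m s : ℕ) (P : PartialOrder (Fin s)) (I : Fin s → ℕ) : Prop :=
  (∀ a, I a ≤ m / 2) ∧ ∀ a b, 0 < I a → P.le b a → b ≠ a → I b = m / 2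

/-- An ideal has full count if every element of its root set has count `⌊m/2⌋`. -/
def FullCount (m : ℕ) {s : ℕ} (I : Fin s → ℕ) : Prop :=
  ∀ a, 0 < I a → I a = m / 2

/-- The cardinality `|I|` of an ideal. -/
def idealCard {s : ℕ} (I : Fin s → ℕ) : ℕ := ∑ a, I a

/-- The cardinality `|I*|` of the root set of an ideal. -/
def rootCard {s : ℕ} (I : Fin s → ℕ) : ℕ :=
  (Finset.univ.filter fun a => 0 < I a).card

/-- `Σ_{i ∈ I*} k_i`. -/
def rootSum {s : ℕ} (π I : Fin s → ℕ) : ℕ :=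
  ∑ a ∈ Finset.univ.filter (fun a => 0 < I a), π a

/-- The `I`-ball centered at `u`. -/
def ballI (m s : ℕ) (π : Fin s → ℕ) (I : Fin s → ℕ)
    (u : ∀ i : Fin s, Fin (π i) → ZMod m) :
    Set (∀ i : Fin s, Fin (π i) → ZMod m) :=
  {v | ∀ i, blockWt m s π (u - v) i ≤ I i}

/-- `𝒞` is `I`-perfect: the `I`-balls centered at codewords are pairwise
disjoint and cover the whole space. -/
def IPerfect (m s : ℕ) (π : Fin s → ℕ) (I : Fin s → ℕ)
    (C : Set (∀ i : Fin s, Fin (π i) → ZMod m)) : Prop :=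
  (C.Pairwise fun c c' => Disjoint (ballI m s π I c) (ballI m s π I c')) ∧
  (⋃ c ∈ C, ballI m s π I c) = Set.univ

/-- The `r`-ball centered at `u`. -/
def ballR (m s : ℕ) (P : PartialOrder (Fin s)) (π : Fin s → ℕ) (r : ℕ)
    (u : ∀ i : Fin s, Fin (π i) → ZMod m) :
    Set (∀ i : Fin s, Fin (π i) → ZMod m) :=
  {v | pomsetDist m s P π u v ≤ r}

/-- The standard dot product on `ℤ_m^n`. -/
def dotProd (m s : ℕ) (π : Fin s → ℕ)
    (c v : ∀ i : Fin s, Fin (π i) → ZMod m) : ZMod m :=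
  ∑ i, ∑ t, c i t * v i t

/-- The dual code `𝒞^⊥`. -/
def dualCode (m s : ℕ) (π : Fin s → ℕ)
    (C : Set (∀ i : Fin s, Fin (π i) → ZMod m)) :
    Set (∀ i : Fin s, Fin (π i) → ZMod m) :=
  {v | ∀ c ∈ C, dotProd m s π c v = 0}

/-- The dual pomset, encoded by the opposite partial order. -/
def dualOrder (s : ℕ) (P : PartialOrder (Fin s)) : PartialOrder (Fin s) where
  le a b := P.le b a
  lt a b := P.lt b a
  le_refl a := P.le_refl a
  le_trans a b c h1 h2 := P.le_trans _ _ _ h2 h1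
  lt_iff_le_not_ge a b := P.lt_iff_le_not_ge b a
  le_antisymm a b h1 h2 := (P.le_antisymm _ _ h1 h2).symm

/-- The minimum `(𝕡,π)`-distance of a code. -/
def minDist (m s : ℕ) (P : PartialOrder (Fin s)) (π : Fin s → ℕ)
    (C : Set (∀ i : Fin s, Fin (π i) → ZMod m)) : ℕ :=
  sInf {r | ∃ c ∈ C, ∃ c' ∈ C, c ≠ c' ∧ r = pomsetWt m s P π (c - c')}

/-- `𝒞` is an MDS `(𝕡,π)`-code: it attains the Singleton bound
`n − ⌈log_m K⌉ ≥ max { Σ_{i∈I*} k_i : I ideal, |I*| = ⌊(d−1)/⌊m/2⌋⌋ }`. -/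
def IsMDS (m s : ℕ) (P : PartialOrder (Fin s)) (π : Fin s → ℕ)
    (C : Set (∀ i : Fin s, Fin (π i) → ZMod m)) : Prop :=
  (∀ I, IsIdeal m s P I →
      rootCard I = (minDist m s P π C - 1) / (m / 2) →
      rootSum π I ≤ (∑ i, π i) - Nat.clog m (Nat.card ↥C)) ∧
  (∃ I, IsIdeal m s P I ∧
      rootCard I = (minDist m s P π C - 1) / (m / 2) ∧
      rootSum π I = (∑ i, π i) - Nat.clog m (Nat.card ↥C))

/-- The chain pomset on `[s]`: the usual total order on `Fin s`. -/
def chainOrder (s : ℕ) : PartialOrder (Fin s) := inferInstance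

/-!
Call `T ⊆ [s]` an information set of `𝒞` if restriction to the blocks in `T` is a bijection from `𝒞`
onto all words on `T`. A difference of codewords supported in the root set `S` of an ideal with
`|S| = ⌊(d - 1) / l⌋` has weight at most `|S| l < d`, so restriction to `Sᶜ` is injective on `𝒞`;
equality in the Singleton bound is exactly what makes both sides equally large, so `Sᶜ` is an
information set.

On a chain `S` is an initial segment, and every ideal `I` either has count `l` throughout `S` or
vanishes off `S`. In the first case `B_I` puts no condition on the blocks in `S`, so restriction to
`Sᶜ` identifies `B_I ∩ 𝒞` with a product of Lee balls, one for each block outside `S`. In the second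
case the centre is the only codeword in the ball, and that product is `1`.
-/

section LeeWeight

variable {m : ℕ}

lemma leeWt_eq_natAbs_valMinAbs [NeZero m] (a : ZMod m) : leeWt m a = a.valMinAbs.natAbs :=
  a.valMinAbs_natAbs_eq_min.symm

@[simp]
lemma leeWt_zero : leeWt m 0 = 0 := by
  simp [leeWt]

lemma leeWt_eq_zero_iff [NeZero m] {a : ZMod m} : leeWt m a = 0 ↔ a = 0 := by
  rw [leeWt_eq_natAbs_valMinAbs, Int.natAbs_eq_zero, ZMod.valMinAbs_eq_zero]

lemma leeWt_le_half [NeZero m] (a : ZMod m) : leeWt m a ≤ m / 2 :=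
  (leeWt_eq_natAbs_valMinAbs a).trans_le a.natAbs_valMinAbs_le

/-- The number of elements of `ZMod m` of Lee weight at most `j`, that is, the size of a Lee ball
of radius `j` in dimension one. -/
def leeBallCard (m j : ℕ) : ℕ := Nat.card {a : ZMod m // leeWt m a ≤ j}

lemma leeBallCard_of_half_le [NeZero m] {j : ℕ} (hj : m / 2 ≤ j) : leeBallCard m j = m :=
  (Nat.card_congr (Equiv.subtypeUnivEquiv fun a => (leeWt_le_half a).trans hj)).trans
    (Nat.card_zmod m)

lemma leeBallCard_of_lt_half {j : ℕ} (hj : j < m / 2) : leeBallCard m j = 2 * j + 1 := by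
  have : NeZero m := ⟨by omega⟩
  have hbij : Set.BijOn ZMod.valMinAbs {a : ZMod m | leeWt m a ≤ j}
      (Finset.Icc (-j : ℤ) j : Set ℤ) := by
    refine ⟨fun a ha => ?_, ZMod.injective_valMinAbs.injOn, fun z hz => ⟨z, ?_⟩⟩
    · rw [Set.mem_ofPred_eq, leeWt_eq_natAbs_valMinAbs] at ha
      rw [Finset.mem_coe, Finset.mem_Icc]
      omega
    · rw [Finset.mem_coe, Finset.mem_Icc] at hz
      have hval : (z : ZMod m).valMinAbs = z :=
        (ZMod.valMinAbs_spec _ _).2 ⟨rfl, by omega, by omega⟩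
      rw [Set.mem_ofPred_eq, leeWt_eq_natAbs_valMinAbs, hval]
      exact ⟨by omega, rfl⟩
  calc leeBallCard m j = Nat.card (Finset.Icc (-j : ℤ) j : Set ℤ) := Nat.card_congr hbij.equiv
    _ = 2 * j + 1 := by
      rw [Nat.card_coe_set_eq, Set.ncard_coe_finset, Int.card_Icc]
      omega

lemma card_leeWt_sub_le (x : ZMod m) (j : ℕ) :
    Nat.card {a : ZMod m // leeWt m (x - a) ≤ j} = leeBallCard m j :=
  Nat.card_congr ((Equiv.subLeft x).subtypeEquiv fun _ => Iff.rfl)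

lemma card_forall_leeWt_sub_le {q : ℕ} (x : Fin q → ZMod m) (j : ℕ) :
    Nat.card {y : Fin q → ZMod m // ∀ a, leeWt m (x a - y a) ≤ j} = leeBallCard m j ^ q := by
  rw [Nat.card_congr (Equiv.subtypePiEquivPi (p := fun a b => leeWt m (x a - b) ≤ j)),
    Nat.card_pi]
  simp only [card_leeWt_sub_le, Finset.prod_const, Finset.card_univ, Fintype.card_fin]

end LeeWeight

/-- The words of the ambient space `ℤ_m^n`, split into blocks according to the labeling `π`. -/
abbrev BlockWord (m : ℕ) {s : ℕ} (π : Fin s → ℕ) : Type := ∀ i : Fin s, Fin (π i) → ZMod m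

section Weight

variable {m s : ℕ} {π : Fin s → ℕ}

lemma blockWt_le_iff {u : BlockWord m π} {i : Fin s} {r : ℕ} :
    blockWt m s π u i ≤ r ↔ ∀ a, leeWt m (u i a) ≤ r := by
  simp [blockWt]

lemma blockWt_le_half [NeZero m] (u : BlockWord m π) (i : Fin s) : blockWt m s π u i ≤ m / 2 :=
  blockWt_le_iff.2 fun _ => leeWt_le_half _

lemma blockWt_eq_zero_iff [NeZero m] {u : BlockWord m π} {i : Fin s} :
    blockWt m s π u i = 0 ↔ u i = 0 := by
  simp only [← Nat.le_zero, blockWt_le_iff, funext_iff, Pi.zero_apply]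
  simp only [Nat.le_zero, leeWt_eq_zero_iff]

lemma pomsetWt_le_of_eq_zero_off [NeZero m] {P : PartialOrder (Fin s)} {S : Finset (Fin s)}
    (hS : ∀ a ∈ S, ∀ b, P.le b a → b ∈ S) {u : BlockWord m π} (hu : ∀ i ∉ S, u i = 0) :
    pomsetWt m s P π u ≤ S.card * (m / 2) := by
  have hblock : ∀ i ∉ S, blockWt m s π u i = 0 := fun i hi => blockWt_eq_zero_iff.2 (hu i hi)
  have hoff : ∀ i ∉ S, ¬∃ j, j ≠ i ∧ P.le i j ∧ 0 < blockWt m s π u j := by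
    rintro i hi ⟨j, -, hij, hj⟩
    exact hj.ne' (hblock j fun hjS => hi (hS j hjS i hij))
  rw [pomsetWt, ← Finset.sum_subset S.subset_univ fun i _ hi => by
    rw [if_neg (hoff i hi), hblock i hi]]
  refine Finset.sum_le_card_nsmul _ _ _ fun i _ => ?_
  split_ifs
  · exact le_rfl
  · exact blockWt_le_half u i

lemma eq_zero_of_pomsetWt_eq_zero (hm : 1 < m) {P : PartialOrder (Fin s)}
    {u : BlockWord m π} (hu : pomsetWt m s P π u = 0) : u = 0 := by
  have : NeZero m := ⟨by omega⟩
  funext i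
  have hi := Finset.sum_eq_zero_iff.1 hu i (Finset.mem_univ i)
  split_ifs at hi
  · omega
  · exact blockWt_eq_zero_iff.1 hi

end Weight

section InformationSet

variable {m s : ℕ} {π I : Fin s → ℕ} {P : PartialOrder (Fin s)} {C : Set (BlockWord m π)}
  {S T : Finset (Fin s)} {u : BlockWord m π}

/-- `T` is an information set of the code `C`: every word on the blocks in `T` is the restriction of
exactly one codeword. -/
def IsInformationSet (C : Set (BlockWord m π)) (T : Finset (Fin s)) : Prop :=
  Set.BijOn (T.restrict : BlockWord m π → ∀ i : T, Fin (π i) → ZMod m) C Set.univ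

lemma card_words_on (T : Finset (Fin s)) :
    Nat.card (∀ i : T, Fin (π i) → ZMod m) = m ^ ∑ i ∈ T, π i := by
  simp only [Nat.card_pi, Nat.card_zmod, Finset.prod_const, Finset.card_univ, Fintype.card_fin]
  rw [Finset.prod_coe_sort T fun i => m ^ π i, Finset.prod_pow_eq_pow_sum]

lemma card_box (u : BlockWord m π) (I : Fin s → ℕ) (T : Finset (Fin s)) :
    Nat.card {w : ∀ i : T, Fin (π i) → ZMod m // ∀ (i : T) a, leeWt m (u i a - w i a) ≤ I i} =
      ∏ i ∈ T, leeBallCard m (I i) ^ π i := by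
  rw [Nat.card_congr (Equiv.subtypePiEquivPi
    (p := fun (i : T) (y : Fin (π i) → ZMod m) => ∀ a, leeWt m (u i a - y a) ≤ I i)), Nat.card_pi]
  simp only [card_forall_leeWt_sub_le]
  exact Finset.prod_coe_sort T fun i => leeBallCard m (I i) ^ π i

lemma mem_ballI_iff {v : BlockWord m π} :
    v ∈ ballI m s π I u ↔ ∀ i a, leeWt m (u i a - v i a) ≤ I i :=
  forall_congr' fun _ => blockWt_le_iff

lemma mem_ballI_self : u ∈ ballI m s π I u := by
  simp [mem_ballI_iff]

lemma IsInformationSet.card_ballI_inter [NeZero m] (hC : IsInformationSet C T)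
    (hI : ∀ i ∉ T, m / 2 ≤ I i) (u : BlockWord m π) :
    Nat.card ↥(ballI m s π I u ∩ C) = ∏ i ∈ T, leeBallCard m (I i) ^ π i := by
  have hbij : Set.BijOn T.restrict (ballI m s π I u ∩ C)
      {w : ∀ i : T, Fin (π i) → ZMod m | ∀ (i : T) a, leeWt m (u i a - w i a) ≤ I i} := by
    refine ⟨fun v hv i => mem_ballI_iff.1 hv.1 i, hC.injOn.mono Set.inter_subset_right,
      fun w hw => ?_⟩
    obtain ⟨c, hcC, rfl⟩ := hC.surjOn (Set.mem_univ w)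
    refine ⟨c, ⟨mem_ballI_iff.2 fun i => ?_, hcC⟩, rfl⟩
    by_cases hi : i ∈ T
    · exact hw ⟨i, hi⟩
    · exact fun _ => (leeWt_le_half _).trans (hI i hi)
  exact (Nat.card_congr hbij.equiv).trans (card_box u I T)

lemma IsInformationSet.ballI_inter_eq_singleton [NeZero m] (hC : IsInformationSet C T)
    (hI : ∀ i ∈ T, I i = 0) (hu : u ∈ C) : ballI m s π I u ∩ C = {u} := by
  refine Set.eq_singleton_iff_unique_mem.2 ⟨⟨mem_ballI_self, hu⟩, fun v hv => ?_⟩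
  refine hC.injOn hv.2 hu (funext fun i => funext fun a => ?_)
  have hle : leeWt m (u i a - v i a) ≤ 0 := hI i i.2 ▸ mem_ballI_iff.1 hv.1 i a
  exact (sub_eq_zero.1 (leeWt_eq_zero_iff.1 (Nat.le_zero.1 hle))).symm

lemma restrict_compl_injOn [NeZero m] (hS : ∀ a ∈ S, ∀ b, P.le b a → b ∈ S)
    (hC : ∀ c ∈ C, ∀ c' ∈ C, c ≠ c' → S.card * (m / 2) < pomsetWt m s P π (c - c')) :
    Set.InjOn (Sᶜ.restrict : BlockWord m π → ∀ i : ↥Sᶜ, Fin (π i) → ZMod m) C := by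
  intro c hc c' hc' hcc'
  by_contra hne
  refine (hC c hc c' hc' hne).not_ge (pomsetWt_le_of_eq_zero_off hS fun i hi => ?_)
  exact sub_eq_zero.2 (congrFun hcc' ⟨i, Finset.mem_compl.2 hi⟩)

lemma isInformationSet_of_injOn [NeZero m]
    (hinj : Set.InjOn (T.restrict : BlockWord m π → ∀ i : T, Fin (π i) → ZMod m) C)
    (hcard : Nat.card C = m ^ ∑ i ∈ T, π i) : IsInformationSet C T := by
  refine ⟨Set.mapsTo_univ _ _, hinj, Set.surjOn_iff_surjective.2 ?_⟩
  exact ((Nat.bijective_iff_injective_and_card _).2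
    ⟨hinj.injective, hcard.trans (card_words_on T).symm⟩).2

end InformationSet

section Singleton

variable {m s k : ℕ} {π I : Fin s → ℕ} {P : PartialOrder (Fin s)} {C : Set (BlockWord m π)}

/-- The number `⌊(d - 1) / l⌋` of root elements of the ideals in the Singleton bound, where `d` is
the minimum distance of `C` and `l = ⌊m / 2⌋`. -/
def singletonRank (m s : ℕ) (P : PartialOrder (Fin s)) (π : Fin s → ℕ) (C : Set (BlockWord m π)) :
    ℕ :=
  (minDist m s P π C - 1) / (m / 2)

lemma singletonRank_mul_half_lt (hm : 1 < m) {c c' : BlockWord m π} (hc : c ∈ C)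
    (hc' : c' ∈ C) (hne : c ≠ c') :
    singletonRank m s P π C * (m / 2) < pomsetWt m s P π (c - c') := by
  have hmin : minDist m s P π C ≤ pomsetWt m s P π (c - c') :=
    Nat.sInf_le ⟨c, hc, c', hc', hne, rfl⟩
  have hpos : 0 < pomsetWt m s P π (c - c') :=
    Nat.pos_of_ne_zero fun h => hne (sub_eq_zero.1 (eq_zero_of_pomsetWt_eq_zero hm h))
  have hrank : singletonRank m s P π C * (m / 2) ≤ minDist m s P π C - 1 := Nat.div_mul_le_self _ _
  omega

lemma IsIdeal.pos_of_le (hI : IsIdeal m s P I) {a b : Fin s} (ha : 0 < I a) (hba : P.le b a) :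
    0 < I b := by
  rcases eq_or_ne b a with rfl | hne
  · exact ha
  · exact hI.2 a b ha hba hne ▸ ha.trans_le (hI.1 a)

lemma le_length_of_card_eq_pow (hm : 1 < m) (hcard : Nat.card C = m ^ k) : k ≤ ∑ i, π i := by
  have : NeZero m := ⟨by omega⟩
  refine (Nat.pow_le_pow_iff_right hm).1 ?_
  calc m ^ k = Nat.card C := hcard.symm
    _ ≤ Nat.card (BlockWord m π) := Nat.card_le_card_of_injective _ Subtype.val_injective
    _ = m ^ ∑ i, π i := by
      simp only [BlockWord, Nat.card_pi, Nat.card_zmod, Finset.prod_const, Finset.card_univ,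
        Fintype.card_fin, Finset.prod_pow_eq_pow_sum]

theorem IsMDS.exists_isInformationSet_compl (hm : 1 < m) (hcard : Nat.card C = m ^ k)
    (hmds : IsMDS m s P π C) :
    ∃ S : Finset (Fin s), (∀ a ∈ S, ∀ b, P.le b a → b ∈ S) ∧ S.card = singletonRank m s P π C ∧
      ∑ i ∈ S, π i + k = ∑ i, π i ∧ IsInformationSet C Sᶜ := by
  have : NeZero m := ⟨by omega⟩
  obtain ⟨-, J, hJ, hrank, hsum⟩ := hmds
  rw [hcard, Nat.clog_pow _ _ hm] at hsum
  let S : Finset (Fin s) := {a | 0 < J a}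
  have hlower : ∀ a ∈ S, ∀ b, P.le b a → b ∈ S := fun a ha b hba =>
    (Finset.mem_filter_univ b).2 (hJ.pos_of_le ((Finset.mem_filter_univ a).1 ha) hba)
  have hS : S.card = singletonRank m s P π C := hrank
  have hlen : ∑ i ∈ S, π i + k = ∑ i, π i := by
    rw [show ∑ i ∈ S, π i = ∑ i, π i - k from hsum,
      Nat.sub_add_cancel (le_length_of_card_eq_pow hm hcard)]
  have hdim : k = ∑ i ∈ Sᶜ, π i := by
    have := Finset.sum_add_sum_compl S π
    omega
  refine ⟨S, hlower, hS, hlen, isInformationSet_of_injOn ?_ (hdim ▸ hcard)⟩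
  refine restrict_compl_injOn hlower fun c hc c' hc' hne => ?_
  exact hS ▸ singletonRank_mul_half_lt hm hc hc' hne

lemma IsMDS.singletonRank_mul_add {t : ℕ} (hm : 1 < m) (ht : ∀ i, π i = t)
    (hcard : Nat.card C = m ^ k) (hmds : IsMDS m s P π C) :
    singletonRank m s P π C * t + k = ∑ i, π i := by
  obtain ⟨S, -, hrank, hlen, -⟩ := hmds.exists_isInformationSet_compl hm hcard
  rw [← hlen, Finset.sum_congr rfl fun i _ => ht i, Finset.sum_const, hrank, smul_eq_mul]

end Singleton

section Chain

variable {m s k lam p r : ℕ} {π I : Fin s → ℕ}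

lemma eq_filter_val_lt_card {S : Finset (Fin s)} (hS : ∀ a ∈ S, ∀ b ≤ a, b ∈ S) :
    S = ({i | i < S.card} : Finset (Fin s)) := by
  refine Finset.eq_of_subset_of_card_le (fun a ha => ?_) ?_
  · have hIic : (Finset.Iic a).card ≤ S.card :=
      Finset.card_le_card fun b hb => hS a ha b (Finset.mem_Iic.1 hb)
    rw [Fin.card_Iic] at hIic
    exact (Finset.mem_filter_univ a).2 hIic
  · exact Fin.card_filter_val_lt.trans_le (min_le_right _ _)

lemma IsIdeal.idealCard_le {P : PartialOrder (Fin s)} (hI : IsIdeal m s P I) :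
    idealCard I ≤ s * (m / 2) := by
  simpa [idealCard] using Finset.sum_le_card_nsmul Finset.univ I _ fun i _ => hI.1 i

lemma IsIdeal.mul_half_add_le (hI : IsIdeal m s (chainOrder s) I) {i : Fin s} (hi : 0 < I i) :
    i * (m / 2) + I i ≤ idealCard I := by
  have hbelow : ∑ j ∈ Finset.Iio i, I j = i * (m / 2) := by
    rw [Finset.sum_const_nat fun j hj => hI.2 i j hi (Finset.mem_Iio.1 hj).le
      (Finset.mem_Iio.1 hj).ne, Fin.card_Iio]
  calc i * (m / 2) + I i = ∑ j ∈ Finset.Iic i, I j := by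
        rw [← Finset.Iio_insert, Finset.sum_insert Finset.notMem_Iio_self, hbelow, add_comm]
    _ ≤ ∑ j, I j := Finset.sum_le_univ_sum_of_nonneg fun _ => Nat.zero_le _

lemma IsIdeal.le_mul_half_add (hI : IsIdeal m s (chainOrder s) I) {i : Fin s}
    (hi : I i < m / 2) : idealCard I ≤ i * (m / 2) + I i := by
  have habove : ∀ j, i < j → I j = 0 := fun j hij => by
    by_contra hj
    exact hi.ne (hI.2 j i (Nat.pos_of_ne_zero hj) hij.le hij.ne)
  have hbelow : ∑ j ∈ Finset.Iio i, I j ≤ i * (m / 2) := by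
    simpa using Finset.sum_le_card_nsmul (Finset.Iio i) I _ fun j _ => hI.1 j
  calc ∑ j, I j = ∑ j ∈ Finset.Iic i, I j :=
        (Finset.sum_subset (Finset.subset_univ _) fun j _ hj =>
          habove j (not_le.1 fun h => hj (Finset.mem_Iic.2 h))).symm
    _ = ∑ j ∈ Finset.Iio i, I j + I i := by
        rw [← Finset.Iio_insert, Finset.sum_insert Finset.notMem_Iio_self, add_comm]
    _ ≤ i * (m / 2) + I i := Nat.add_le_add_right hbelow _

/-- The truncated subtraction makes the right-hand side `0` beyond the last root element. -/
lemma IsIdeal.apply_eq_min (hI : IsIdeal m s (chainOrder s) I) (i : Fin s) :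
    I i = min (m / 2) (idealCard I - i * (m / 2)) := by
  have hle := hI.1 i
  have hlower := hI.mul_half_add_le (i := i)
  have hupper := hI.le_mul_half_add (i := i)
  omega

lemma IsIdeal.apply_eq_half (hI : IsIdeal m s (chainOrder s) I)
    (hcard : lam * (m / 2) ≤ idealCard I) {i : Fin s} (hi : i < lam) : I i = m / 2 := by
  have hmul := Nat.mul_le_mul_right (m / 2) (Nat.succ_le_of_lt hi)
  rw [Nat.succ_mul] at hmul
  rw [hI.apply_eq_min]
  omega

lemma IsIdeal.apply_eq_zero (hI : IsIdeal m s (chainOrder s) I)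
    (hcard : idealCard I ≤ lam * (m / 2)) {i : Fin s} (hi : lam ≤ i) : I i = 0 := by
  have hmul := Nat.mul_le_mul_right (m / 2) hi
  rw [hI.apply_eq_min]
  omega

lemma prod_leeBallCard_eq_pow {T U : Finset (Fin s)} (hm : 1 < m) (hUT : U ⊆ T)
    (hfull : ∀ i ∈ U, m / 2 ≤ I i) (hzero : ∀ i ∈ T, i ∉ U → I i = 0) :
    ∏ i ∈ T, leeBallCard m (I i) ^ π i = m ^ ∑ i ∈ U, π i := by
  have : NeZero m := ⟨by omega⟩
  rw [← Finset.prod_subset hUT fun i hiT hiU => by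
    rw [hzero i hiT hiU, leeBallCard_of_lt_half (by omega), mul_zero, zero_add, one_pow]]
  rw [Finset.prod_congr rfl fun i hi => by rw [leeBallCard_of_half_le (hfull i hi)],
    Finset.prod_pow_eq_pow_sum]

lemma IsMDS.isInformationSet_chain {C : Set (BlockWord m π)} (hm : 1 < m)
    (hcard : Nat.card C = m ^ k) (hmds : IsMDS m s (chainOrder s) π C) :
    IsInformationSet C {i : Fin s | singletonRank m s (chainOrder s) π C ≤ i} := by
  obtain ⟨S, hlower, hrank, -, hS⟩ := hmds.exists_isInformationSet_compl hm hcard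
  rw [eq_filter_val_lt_card hlower, hrank, Finset.compl_filter] at hS
  simpa only [not_lt] using hS

lemma IsIdeal.prod_leeBallCard_of_le (hI : IsIdeal m s (chainOrder s) I) (hm : 1 < m)
    (hcard : idealCard I ≤ r * (m / 2)) :
    ∏ i ∈ {i : Fin s | r ≤ i}, leeBallCard m (I i) ^ π i = 1 := by
  rw [prod_leeBallCard_eq_pow hm (Finset.empty_subset _) (by simp) fun i hi _ =>
    hI.apply_eq_zero hcard ((Finset.mem_filter_univ i).1 hi), Finset.sum_empty, pow_zero]

lemma IsIdeal.prod_leeBallCard_of_eq_mul (hI : IsIdeal m s (chainOrder s) I) (hm : 1 < m)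
    (hcard : idealCard I = lam * (m / 2)) :
    ∏ i ∈ {i : Fin s | r ≤ i}, leeBallCard m (I i) ^ π i =
      m ^ ∑ i ∈ {i : Fin s | r ≤ i ∧ i < lam}, π i := by
  refine prod_leeBallCard_eq_pow hm (Finset.monotone_filter_right _ fun _ _ hi => hi.1)
    (fun i hi => ?_) fun i hiT hiU => ?_
  · exact (hI.apply_eq_half hcard.ge ((Finset.mem_filter_univ i).1 hi).2).ge
  · simp only [Finset.mem_filter_univ, not_and, not_lt] at hiT hiU
    exact hI.apply_eq_zero hcard.le (hiU hiT)

lemma IsIdeal.prod_leeBallCard_of_eq_mul_add (hI : IsIdeal m s (chainOrder s) I) {a : Fin s}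
    (hra : r ≤ a) (hp : p < m / 2) (hcard : idealCard I = a * (m / 2) + p) :
    ∏ i ∈ {i : Fin s | r ≤ i}, leeBallCard m (I i) ^ π i =
      (2 * p + 1) ^ π a * m ^ ∑ i ∈ {i : Fin s | r ≤ i ∧ i < a}, π i := by
  have hIa : I a = p := by
    rw [hI.apply_eq_min]
    omega
  have hupper : idealCard I ≤ (a + 1) * (m / 2) := by
    rw [add_one_mul]
    omega
  rw [← Finset.mul_prod_erase _ _ ((Finset.mem_filter_univ a).2 hra), hIa,
    leeBallCard_of_lt_half hp, prod_leeBallCard_eq_pow (by omega) (fun i hi => ?_) (fun i hi => ?_)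
      fun i hiT hiU => ?_]
  · rw [Finset.mem_filter_univ] at hi
    exact Finset.mem_erase.2 ⟨hi.2.ne, (Finset.mem_filter_univ i).2 hi.1⟩
  · have hia : i < a := ((Finset.mem_filter_univ i).1 hi).2
    exact (hI.apply_eq_half (Nat.le.intro hcard.symm) hia).ge
  · simp only [Finset.mem_erase, Finset.mem_filter_univ, not_and, not_lt] at hiT hiU
    exact hI.apply_eq_zero hupper ((hiU hiT.2).lt_of_ne' hiT.1)

theorem IsMDS.card_ballI_inter_chain {C : Set (BlockWord m π)} (hm : 1 < m)
    (hcard : Nat.card C = m ^ k) (hmds : IsMDS m s (chainOrder s) π C)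
    (hI : IsIdeal m s (chainOrder s) I) {u : BlockWord m π} (hu : u ∈ C) :
    Nat.card ↥(ballI m s π I u ∩ C) =
      ∏ i ∈ {i : Fin s | singletonRank m s (chainOrder s) π C ≤ i}, leeBallCard m (I i) ^ π i := by
  have : NeZero m := ⟨by omega⟩
  have hinfo := hmds.isInformationSet_chain hm hcard
  set r := singletonRank m s (chainOrder s) π C
  rcases le_total (r * (m / 2)) (idealCard I) with hge | hle
  · refine hinfo.card_ballI_inter (fun i hi => ?_) u
    exact (hI.apply_eq_half hge (by simpa using hi)).ge
  · have hzero : ∀ i ∈ ({i | r ≤ i} : Finset (Fin s)), I i = 0 := fun i hi =>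
      hI.apply_eq_zero hle ((Finset.mem_filter_univ i).1 hi)
    rw [hinfo.ballI_inter_eq_singleton hzero hu, hI.prod_leeBallCard_of_le hm hle,
      Nat.card_coe_set_eq, Set.ncard_singleton]

theorem chain_mds_ball_card_general {C : Set (BlockWord m π)} (hm : 1 < m)
    (hcard : Nat.card C = m ^ k) (hmds : IsMDS m s (chainOrder s) π C)
    (hr : singletonRank m s (chainOrder s) π C = r) (hI : IsIdeal m s (chainOrder s) I)
    {u : BlockWord m π} (hu : u ∈ C) :
    (idealCard I ≤ r * (m / 2) → Nat.card ↥(ballI m s π I u ∩ C) = 1) ∧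
    (∀ lam : ℕ, idealCard I = lam * (m / 2) →
      Nat.card ↥(ballI m s π I u ∩ C) =
        m ^ ∑ i ∈ {i : Fin s | r ≤ i ∧ i < lam}, π i) ∧
    (∀ (a : Fin s) (p : ℕ), r ≤ a → p < m / 2 → idealCard I = a * (m / 2) + p →
      Nat.card ↥(ballI m s π I u ∩ C) =
        (2 * p + 1) ^ π a * m ^ ∑ i ∈ {i : Fin s | r ≤ i ∧ i < a}, π i) := by
  rw [hmds.card_ballI_inter_chain hm hcard hI hu, hr]
  exact ⟨hI.prod_leeBallCard_of_le hm, fun _ => hI.prod_leeBallCard_of_eq_mul hm,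
    fun _ _ => hI.prod_leeBallCard_of_eq_mul_add⟩

lemma sum_filter_eq_mul_sub {t : ℕ} (ht : ∀ i, π i = t) (hlam : lam ≤ s) :
    ∑ i ∈ {i : Fin s | r ≤ i ∧ i < lam}, π i = t * (lam - r) := by
  have hIco : ({i | r ≤ i ∧ i < lam} : Finset (Fin s)).map Fin.valEmbedding = Finset.Ico r lam := by
    ext x
    simp only [Finset.mem_map, Finset.mem_filter_univ, Finset.mem_Ico, Fin.valEmbedding_apply]
    exact ⟨fun ⟨_, hi, hix⟩ => hix ▸ hi, fun hx => ⟨⟨x, hx.2.trans_le hlam⟩, hx, rfl⟩⟩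
  rw [Finset.sum_congr rfl fun i _ => ht i, Finset.sum_const, ← Finset.card_map, hIco,
    Nat.card_Ico, smul_eq_mul, mul_comm]

end Chain

/-- `|B_I ∩ 𝒞|` for an MDS linear code on a chain pomset with
equal block dimensions. -/
theorem chain_mds_ball_card
    (m s : ℕ) (hm : 4 ≤ m) (hs : 1 ≤ s)
    (π : Fin s → ℕ) (hπ : ∀ i, 0 < π i)
    (t : ℕ) (ht : ∀ i, π i = t)
    (n k d : ℕ) (hn : n = ∑ i, π i)
    (C : Submodule (ZMod m) (∀ i : Fin s, Fin (π i) → ZMod m))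
    (hcard : Nat.card ↥C = m ^ k)
    (hd : IsLeast {r | ∃ c ∈ (C : Set (∀ i : Fin s, Fin (π i) → ZMod m)),
      ∃ c' ∈ (C : Set (∀ i : Fin s, Fin (π i) → ZMod m)), c ≠ c' ∧
        r = pomsetWt m s (chainOrder s) π (c - c')} d)
    (hmds : IsMDS m s (chainOrder s) π (C : Set (∀ i : Fin s, Fin (π i) → ZMod m))) :
    ∀ I, IsIdeal m s (chainOrder s) I →
      (idealCard I ≤ ((n - k) / t) * (m / 2) →
        Nat.card ↥(ballI m s π I 0 ∩ (C : Set (∀ i : Fin s, Fin (π i) → ZMod m))) = 1) ∧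
      (∀ lam : ℕ, idealCard I = lam * (m / 2) →
        ((n - k) / t) * (m / 2) ≤ idealCard I →
        Nat.card ↥(ballI m s π I 0 ∩ (C : Set (∀ i : Fin s, Fin (π i) → ZMod m))) =
          m ^ (t * lam + k - n)) ∧
      (∀ lam p : ℕ, 1 ≤ p → p ≤ m / 2 - 1 →
        idealCard I = lam * (m / 2) + p →
        ((n - k) / t) * (m / 2) < idealCard I →
        Nat.card ↥(ballI m s π I 0 ∩ (C : Set (∀ i : Fin s, Fin (π i) → ZMod m))) =
          (2 * p + 1) ^ t * m ^ (t * lam + k - n)) := by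
  intro I hI
  set r := singletonRank m s (chainOrder s) π (C : Set (BlockWord m π)) with hr
  have hlen : r * t + k = n := hn ▸ hmds.singletonRank_mul_add (by omega) ht hcard
  have hrank : (n - k) / t = r := by
    rw [← hlen, Nat.add_sub_cancel, Nat.mul_div_cancel _ (ht ⟨0, hs⟩ ▸ hπ ⟨0, hs⟩)]
  have hexp : ∀ lam ≤ s,
      ∑ i ∈ {i : Fin s | r ≤ i ∧ i < lam}, π i = t * lam + k - n := fun lam hlam => by
    rw [sum_filter_eq_mul_sub ht hlam, ← hlen, Nat.add_sub_add_right, Nat.mul_sub, mul_comm r]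
  have hle : idealCard I ≤ s * (m / 2) := hI.idealCard_le
  obtain ⟨hone, hpow, hmix⟩ :=
    chain_mds_ball_card_general (by omega) hcard hmds hr.symm hI C.zero_mem
  rw [hrank]
  refine ⟨hone, fun lam hlam _ => ?_, fun lam p hp hp' hlam hlt => ?_⟩
  · rw [hpow lam hlam, hexp lam (Nat.le_of_mul_le_mul_right (hlam ▸ hle) (by omega))]
  · have hlam_lt : lam < s := Nat.lt_of_mul_lt_mul_right (a := m / 2) (by omega)
    have hr_le : r ≤ lam := Nat.le_of_lt_succ <|
      Nat.lt_of_mul_lt_mul_right (a := m / 2) (by rw [Nat.succ_mul]; omega)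
    rw [← hexp lam hlam_lt.le, ← ht ⟨lam, hlam_lt⟩]
    exact hmix ⟨lam, hlam_lt⟩ p hr_le (by omega) hlam

end
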